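/- Let V be a real vector space with a symmetric bilinear form B, and suppose V = H ⊕ W with B(h, w) = 0 for all h ∈ H, w ∈ W, B positive semidefinite on H, and B negative semidefinite on W. Let c ∈ ℝ and let α ∈ V satisfy B(α, α) ≥ c. Then for any finite family f₁, …, fₙ ∈ V there exist signs ε₁, …, εₙ ∈ {+1, −1} such that, setting γ = α + Σᵢ εᵢ fᵢ and letting γ⁺ denote the H-component of γ, one has B(γ⁺, γ⁺) ≥ c. -/

import Mathlib

/-!
Let `Q v = B v v`. Replacing `g` by `-g` changes the sign of the cross term `polar Q a g`, so one
of `Q (a + g)` and `Q (a - g)` is at least `Q a + Q g`. Applied to the `H`-components of the `fᵢ`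
one at a time, starting from the `H`-component `α⁺` of `α`, this gives signs with `Q α⁺ ≤ Q γ⁺`.
Moreover `Q α ≤ Q α⁺`, since the `W`-component of `α` contributes a nonpositive summand.
-/

section QuadraticMap

variable {R V N ι : Type*} [CommRing R] [AddCommGroup V] [Module R V] [AddCommGroup N]
  [Module R N]

theorem quadraticMap_le_of_sub_mem_of_isOrtho_of_nonpos [PartialOrder N] [IsOrderedAddMonoid N]
    {Q : QuadraticMap R V N} {W : Submodule R V} {v h : V} (hvh : v - h ∈ W)
    (horth : ∀ w ∈ W, Q.IsOrtho h w) (hnegW : ∀ w ∈ W, Q w ≤ 0) : Q v ≤ Q h :=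
  calc Q v = Q (h + (v - h)) := by rw [add_sub_cancel]
    _ = Q h + Q (v - h) := horth _ hvh
    _ ≤ Q h := add_le_of_nonpos_right (hnegW _ hvh)

variable [LinearOrder N] [IsOrderedAddMonoid N]

theorem exists_sign_quadraticMap_add_le (Q : QuadraticMap R V N) (a g : V) :
    ∃ t : R, (t = 1 ∨ t = -1) ∧ Q a + Q g ≤ Q (a + t • g) := by
  rcases le_total 0 (QuadraticMap.polar Q a g) with hpolar | hpolar
  · refine ⟨1, .inl rfl, ?_⟩
    rw [one_smul, QuadraticMap.map_add Q a g]
    exact le_add_of_nonneg_right hpolar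
  · refine ⟨-1, .inr rfl, ?_⟩
    rw [neg_one_smul, QuadraticMap.map_add Q a (-g), Q.map_neg, Q.polar_neg_right]
    exact le_add_of_nonneg_right (neg_nonneg.2 hpolar)

theorem exists_signs_quadraticMap_add_sum_le (Q : QuadraticMap R V N) (s : Finset ι) (a : V)
    (g : ι → V) :
    ∃ ε : ι → R, (∀ i, ε i = 1 ∨ ε i = -1) ∧
      Q a + ∑ i ∈ s, Q (g i) ≤ Q (a + ∑ i ∈ s, ε i • g i) := by
  classical
  induction s using Finset.induction_on with
  | empty => exact ⟨1, fun _ ↦ .inl rfl, by simp⟩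
  | insert j s hj ih =>
    obtain ⟨ε, hε, hle⟩ := ih
    obtain ⟨t, ht, htle⟩ := exists_sign_quadraticMap_add_le Q (a + ∑ i ∈ s, ε i • g i) (g j)
    have hsum : ∑ i ∈ s, Function.update ε j t i • g i = ∑ i ∈ s, ε i • g i :=
      Finset.sum_congr rfl fun i hi ↦ by
        rw [Function.update_of_ne (ne_of_mem_of_not_mem hi hj)]
    refine ⟨Function.update ε j t,
      (Function.forall_update_iff ε fun _ x ↦ x = 1 ∨ x = -1).2 ⟨ht, fun i _ ↦ hε i⟩, ?_⟩
    calc Q a + ∑ i ∈ insert j s, Q (g i)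
        = Q a + ∑ i ∈ s, Q (g i) + Q (g j) := by
          rw [Finset.sum_insert hj, add_left_comm, add_comm]
      _ ≤ Q (a + ∑ i ∈ s, ε i • g i) + Q (g j) := by gcongr
      _ ≤ Q (a + ∑ i ∈ s, ε i • g i + t • g j) := htle
      _ = Q (a + ∑ i ∈ insert j s, Function.update ε j t i • g i) := by
          rw [Finset.sum_insert hj, Function.update_self, hsum, add_assoc, add_comm (t • g j)]

theorem stmt_3_general [Fintype ι] {Q : QuadraticMap R V N} {H W : Submodule R V}
    (hcodisj : Codisjoint H W) (horth : ∀ h ∈ H, ∀ w ∈ W, Q.IsOrtho h w)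
    (hposH : ∀ h ∈ H, 0 ≤ Q h) (hnegW : ∀ w ∈ W, Q w ≤ 0) (α : V) (f : ι → V) :
    ∃ ε : ι → R, (∀ i, ε i = 1 ∨ ε i = -1) ∧
      ∀ p ∈ H, ∀ q ∈ W, α + ∑ i, ε i • f i = p + q → Q α ≤ Q p := by
  have hsplit (v : V) : ∃ h ∈ H, v - h ∈ W := by
    obtain ⟨h, w, hh, hw, rfl⟩ := Submodule.codisjoint_iff_exists_add_eq.1 hcodisj v
    exact ⟨h, hh, by rwa [add_sub_cancel_left]⟩
  choose π hπH hπW using hsplit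
  obtain ⟨ε, hε, hle⟩ :=
    exists_signs_quadraticMap_add_sum_le Q Finset.univ (π α) fun i ↦ π (f i)
  refine ⟨ε, hε, fun p hp q hq hγ ↦ ?_⟩
  -- `H ⊓ W` may be nonzero, so `p` is only known to agree with the chosen `H`-part modulo `W`.
  have hsub : π α + ∑ i, ε i • π (f i) - p =
      q - (α - π α + ∑ i, ε i • (f i - π (f i))) := by
    rw [← sub_eq_iff_eq_add'.2 hγ]
    simp only [smul_sub, Finset.sum_sub_distrib]
    abel
  have hsubW : π α + ∑ i, ε i • π (f i) - p ∈ W :=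
    hsub ▸ W.sub_mem hq (W.add_mem (hπW α) (W.sum_mem fun i _ ↦ W.smul_mem _ (hπW _)))
  calc Q α ≤ Q (π α) :=
        quadraticMap_le_of_sub_mem_of_isOrtho_of_nonpos (hπW α) (horth _ (hπH α)) hnegW
    _ ≤ Q (π α) + ∑ i, Q (π (f i)) :=
        le_add_of_nonneg_right (Finset.sum_nonneg fun i _ ↦ hposH _ (hπH _))
    _ ≤ Q (π α + ∑ i, ε i • π (f i)) := hle
    _ ≤ Q p :=
        quadraticMap_le_of_sub_mem_of_isOrtho_of_nonpos hsubW (horth p hp) hnegW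

end QuadraticMap

/-- Given `V = H ⊕ W` (`B`-orthogonally), `B` positive semidefinite on `H` and
negative semidefinite on `W`, and `α` with `B(α, α) ≥ c`, for any finite family
`f₁, …, fₙ` there are signs `εᵢ = ±1` such that the `H`-component `γ⁺` of
`γ = α + ∑ εᵢ fᵢ` satisfies `B(γ⁺, γ⁺) ≥ c`. -/
theorem stmt_3 (V : Type*) [AddCommGroup V] [Module ℝ V]
    (B : V →ₗ[ℝ] V →ₗ[ℝ] ℝ) (hsymm : ∀ x y, B x y = B y x)
    (H W : Submodule ℝ V) (hcompl : IsCompl H W)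
    (horth : ∀ h ∈ H, ∀ w ∈ W, B h w = 0)
    (hposH : ∀ h ∈ H, 0 ≤ B h h)
    (hnegW : ∀ w ∈ W, B w w ≤ 0)
    (c : ℝ) (α : V) (hα : c ≤ B α α)
    (n : ℕ) (f : Fin n → V) :
    ∃ ε : Fin n → ℝ, (∀ i, ε i = 1 ∨ ε i = -1) ∧
      ∀ γplus γminus : V, γplus ∈ H → γminus ∈ W →
        α + ∑ i, ε i • f i = γplus + γminus →
          c ≤ B γplus γplus := by
  obtain ⟨ε, hε, hle⟩ := stmt_3_general (Q := LinearMap.BilinMap.toQuadraticMap B) hcompl.codisjoint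
    (fun h hh w hw ↦ (LinearMap.BilinForm.toQuadraticMap_isOrtho ⟨hsymm⟩).2 (horth h hh w hw))
    hposH hnegW α f
  exact ⟨ε, hε, fun p q hp hq hγ ↦ hα.trans (hle p hp q hq hγ)⟩
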